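/- Let b ≥ 2, let β ≥ 0, and let n ≥ 0 with standard base-b digits n_l n_{l−1} ⋯ n_0. Then A_n(β) = A_n(0) · Σ_{γ=β}^{2β} Σ_{P ∈ S(γ, γ−β)} Σ_{P: nonoverlapping subwords of n} c(v)c(w)⋯c(z), the equality read in the rational numbers. -/

import Mathlib

/-- The number of integers `0 ≤ m ≤ n` such that `C(n,m)` is not divisible by `k`,
i.e. the number of nonzero entries on row `n` of Pascal's triangle modulo `k`. -/
def rowCount (k n : ℕ) : ℕ :=
  ((Finset.range (n + 1)).filter fun m => ¬ k ∣ n.choose m).card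

/-- The number of borrows when subtracting `m` from `n` in base `b` (for `m ≤ n`):
the number of indices `i ≥ 0` with `m mod b^(i+1) > n mod b^(i+1)`. -/
def borrowCount (b n m : ℕ) : ℕ :=
  ((Finset.range (Nat.digits b n).length).filter fun i => n % b ^ (i + 1) < m % b ^ (i + 1)).card

/-- `A_n(β)`: the number of `0 ≤ m ≤ n` with exactly `β` borrows
when subtracting `m` from `n` in base `b`. -/
def borrowA (b n β : ℕ) : ℕ :=
  ((Finset.range (n + 1)).filter fun m => borrowCount b n m = β).card

/-- `B_n(β)` with respect to `L` digit positions: the number of `n < m ≤ b^L - 1` such that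
exactly `β` of the indices `0 ≤ i ≤ L - 1` satisfy `m mod b^(i+1) > n mod b^(i+1)`. -/
def borrowB (b L n β : ℕ) : ℕ :=
  ((Finset.Ioc n (b ^ L - 1)).filter fun m =>
    ((Finset.range L).filter fun i => n % b ^ (i + 1) < m % b ^ (i + 1)).card = β).card

/-- The base-`b` digit string of `n`, most significant digit first (empty for `n = 0`). -/
def wordOf (b n : ℕ) : List ℕ := (Nat.digits b n).reverse

/-- `|n|_w`: the number of occurrences of `w` as a contiguous subword of the
base-`b` digit string of `n`. -/
def subwordCount (b n : ℕ) (w : List ℕ) : ℕ :=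
  ((Finset.range ((wordOf b n).length + 1 - w.length)).filter fun s =>
    ((wordOf b n).drop s).take w.length = w).card

/-- `c(w_k ⋯ w_0)` for a word `w = [w_k, …, w_0]` (most significant letter first):
`(w_k/(w_k+1)) · (∏_{h=1}^{k−1} (b−w_{k−h})/(w_{k−h}+1)) · (b−w_0−1)/(w_0+1)`. -/
def cword (b : ℕ) (w : List ℕ) : ℚ :=
  ((w.getD 0 0 : ℚ) / ((w.getD 0 0 : ℚ) + 1)) *
    (∏ h ∈ Finset.Ico 1 (w.length - 1),
      ((b : ℚ) - (w.getD h 0 : ℚ)) / ((w.getD h 0 : ℚ) + 1)) *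
    (((b : ℚ) - (w.getD (w.length - 1) 0 : ℚ) - 1) / ((w.getD (w.length - 1) 0 : ℚ) + 1))

/-- The sum `Σ c(v)c(w)⋯c(z)` over all sets of pairwise nonoverlapping contiguous subwords
of `W` (identified by their position intervals: a pair `(s, len)` denotes the subword
occupying positions `s, …, s+len-1`) whose multiset of lengths equals `P`. -/
def nonoverlapSum (b : ℕ) (W : List ℕ) (P : Multiset ℕ) : ℚ :=
  ∑ S ∈ ((Finset.range W.length ×ˢ Finset.Icc 1 W.length).powerset.filter fun S =>
      Multiset.map Prod.snd S.val = P ∧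
      (∀ q ∈ S, q.1 + q.2 ≤ W.length) ∧
      (∀ q ∈ S, ∀ r ∈ S, q ≠ r → q.1 + q.2 ≤ r.1 ∨ r.1 + r.2 ≤ q.1)),
    ∏ q ∈ S, cword b ((W.drop q.1).take q.2)

/-- the families of nonoverlapping intervals -/
def Vfam (L : ℕ) : Finset (Finset (ℕ × ℕ)) :=
  (Finset.range L ×ˢ Finset.Icc 2 L).powerset.filter fun S =>
      (∀ q ∈ S, q.1 + q.2 ≤ L) ∧
      (∀ q ∈ S, ∀ r ∈ S, q ≠ r → q.1 + q.2 ≤ r.1 ∨ r.1 + r.2 ≤ q.1)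

lemma mem_Vfam (L : ℕ) (S : Finset (ℕ × ℕ)) : S ∈ Vfam L ↔
    (∀ q ∈ S, 2 ≤ q.2 ∧ q.1 + q.2 ≤ L) ∧
      (∀ q ∈ S, ∀ r ∈ S, q ≠ r → q.1 + q.2 ≤ r.1 ∨ r.1 + r.2 ≤ q.1) := by
  unfold Vfam
  rw [Finset.mem_filter, Finset.mem_powerset]
  constructor
  · rintro ⟨h1, h2, h3⟩
    refine ⟨fun q hq => ⟨?_, h2 q hq⟩, h3⟩
    have := h1 hq
    simp at this
    omega
  · rintro ⟨h1, h3⟩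
    refine ⟨fun q hq => ?_, fun q hq => (h1 q hq).2, h3⟩
    have := h1 q hq
    simp
    omega

lemma Vfam_succ (L : ℕ) : Vfam (L+1) =
    Vfam L ∪ (Finset.range L).biUnion (fun s => (Vfam s).image (insert (s, L+1-s))) := by
  ext S
  simp only [Finset.mem_union, Finset.mem_biUnion, Finset.mem_image, Finset.mem_range]
  constructor
  · intro h
    rw [mem_Vfam] at h
    obtain ⟨h1, h2⟩ := h
    by_cases hE : ∃ q ∈ S, q.1 + q.2 = L + 1
    · right
      obtain ⟨q, hq, hqe⟩ := hE
      have h3 := h1 q hq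
      refine ⟨q.1, by omega, S.erase q, ?_, ?_⟩
      · rw [mem_Vfam]
        refine ⟨fun r hr => ?_, fun r hr t ht => h2 r (Finset.mem_of_mem_erase hr) t (Finset.mem_of_mem_erase ht)⟩
        have hr1 := h1 r (Finset.mem_of_mem_erase hr)
        have hr2 := h2 r (Finset.mem_of_mem_erase hr) q hq (Finset.ne_of_mem_erase hr)
        omega
      · have : (q.1, L + 1 - q.1) = q := by
          ext <;> simp
          omega
        rw [this, Finset.insert_erase hq]
    · left
      push Not at hE
      rw [mem_Vfam]
      refine ⟨fun q hq => ?_, h2⟩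
      have := h1 q hq
      have := hE q hq
      omega
  · rintro (h | ⟨s, hs, T, hT, rfl⟩)
    · rw [mem_Vfam] at h ⊢
      refine ⟨fun q hq => ?_, h.2⟩
      have := h.1 q hq
      omega
    · rw [mem_Vfam] at hT ⊢
      obtain ⟨h1, h2⟩ := hT
      refine ⟨fun q hq => ?_, fun q hq r hr hne => ?_⟩
      · rcases Finset.mem_insert.1 hq with rfl | hq
        · simp; omega
        · have := h1 q hq
          omega
      · rcases Finset.mem_insert.1 hq with rfl | hq <;> rcases Finset.mem_insert.1 hr with rfl | hr
        · exact absurd rfl hne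
        · have := h1 r hr
          right; simp; omega
        · have := h1 q hq
          left; simp; omega
        · exact h2 q hq r hr hne

lemma notMem_Vfam {s k : ℕ} {T : Finset (ℕ × ℕ)} (hT : T ∈ Vfam s) (hk : 0 < k) : (s, k) ∉ T := by
  intro h
  have := ((mem_Vfam _ _).1 hT).1 _ h
  simp at this
  omega

/-- generic weighted sum -/
noncomputable def Gsum {R : Type*} [CommSemiring R] (u : ℕ × ℕ → R) (L : ℕ) : R :=
  ∑ S ∈ Vfam L, ∏ q ∈ S, u q

lemma Gsum_zero {R : Type*} [CommSemiring R] (u : ℕ × ℕ → R) : Gsum u 0 = 1 := by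
  have : Vfam 0 = {∅} := by
    ext S
    simp [Vfam]
    rintro rfl
    simp
  simp [Gsum, this]

lemma Gsum_succ {R : Type*} [CommSemiring R] (u : ℕ × ℕ → R) (L : ℕ) :
    Gsum u (L+1) = Gsum u L + ∑ s ∈ Finset.range L, u (s, L+1-s) * Gsum u s := by
  unfold Gsum
  rw [Vfam_succ, Finset.sum_union, Finset.sum_biUnion]
  · congr 1
    refine Finset.sum_congr rfl fun s hs => ?_
    have hs := Finset.mem_range.1 hs
    rw [Finset.sum_image, Finset.mul_sum]
    · refine Finset.sum_congr rfl fun T hT => ?_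
      rw [Finset.prod_insert (notMem_Vfam hT (by omega))]
    · intro T hT T' hT' h
      have e1 := Finset.erase_insert (notMem_Vfam (k := L+1-s) hT (by omega))
      have e2 := Finset.erase_insert (notMem_Vfam (k := L+1-s) hT' (by omega))
      rw [← e1, h, e2]
  · intro s hs t ht hst
    have hs := Finset.mem_range.1 hs
    have ht := Finset.mem_range.1 ht
    rw [Function.onFun, Finset.disjoint_left]
    intro S h1 h2
    obtain ⟨T, hT, rfl⟩ := Finset.mem_image.1 h1
    obtain ⟨T', hT', h⟩ := Finset.mem_image.1 h2
    have k1 : (s, L+1-s) ∈ insert (t, L+1-t) T' := by rw [h]; simp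
    have k2 : (t, L+1-t) ∈ insert (s, L+1-s) T := by rw [← h]; simp
    rcases Finset.mem_insert.1 k1 with k1 | k1
    · exact hst (Prod.ext_iff.1 k1).1
    rcases Finset.mem_insert.1 k2 with k2 | k2
    · exact hst (Prod.ext_iff.1 k2).1.symm
    have a1 := ((mem_Vfam _ _).1 hT').1 _ k1
    have a2 := ((mem_Vfam _ _).1 hT).1 _ k2
    simp at a1 a2
    omega
  · rw [Finset.disjoint_left]
    intro S h1 h2
    obtain ⟨s, hs, h2⟩ := Finset.mem_biUnion.1 h2
    have hs := Finset.mem_range.1 hs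
    obtain ⟨T, hT, rfl⟩ := Finset.mem_image.1 h2
    have := ((mem_Vfam _ _).1 h1).1 (s, L+1-s) (by simp)
    simp at this
    omega

open Polynomial

/-- strict count -/
def cnt1 (b L n m : ℕ) : ℕ :=
  ((Finset.range L).filter fun i => n % b ^ (i + 1) < m % b ^ (i + 1)).card
/-- weak count -/
def cnt2 (b L n m : ℕ) : ℕ :=
  ((Finset.range L).filter fun i => n % b ^ (i + 1) ≤ m % b ^ (i + 1)).card

lemma card_filter_range_succ (L : ℕ) (p : ℕ → Prop) [DecidablePred p] :
    ((Finset.range (L+1)).filter p).card =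
      ((Finset.range L).filter (fun i => p (i+1))).card + if p 0 then 1 else 0 := by
  rw [Finset.card_filter, Finset.card_filter, Finset.sum_range_succ']

lemma mod_aux {b : ℕ} (hb : 0 < b) (m r i : ℕ) (hr : r < b) :
    (b * m + r) % b ^ (i + 1 + 1) = b * (m % b ^ (i+1)) + r := by
  rw [pow_succ' b (i+1), Nat.mod_mul]
  rw [Nat.mul_add_mod, Nat.mod_eq_of_lt hr, Nat.mul_add_div hb, Nat.div_eq_of_lt hr]
  simp [add_comm]

lemma lt_aux1 {b x y d r : ℕ} (hd : d < b) (h : r ≤ d) : b * x + d < b * y + r ↔ x < y := by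
  constructor
  · intro h1
    by_contra h2
    have := Nat.mul_le_mul_left b (not_lt.1 h2)
    omega
  · intro h1
    have := Nat.mul_le_mul_left b (Nat.succ_le_of_lt h1)
    rw [Nat.mul_succ] at this
    omega

lemma lt_aux2 {b x y d r : ℕ} (hr : r < b) (h : d < r) : b * x + d < b * y + r ↔ x ≤ y := by
  have := lt_aux1 (x := y) (y := x) hr h.le
  constructor
  · intro h1
    by_contra h2
    have := this.2 (not_le.1 h2)
    omega
  · intro h1
    by_contra h2
    have h3 := Nat.mul_le_mul_left b h1
    omega

lemma cnt1_le {b L n m d r : ℕ} (hd : d < b) (h : r ≤ d) :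
    cnt1 b (L+1) (b*n+d) (b*m+r) = cnt1 b L n m := by
  unfold cnt1
  rw [card_filter_range_succ]
  simp only [mod_aux (by omega : 0 < b) _ _ _ hd, mod_aux (by omega : 0 < b) _ _ _ (h.trans_lt hd), lt_aux1 hd h]
  simp [Nat.mod_eq_of_lt hd, Nat.mod_eq_of_lt (h.trans_lt hd), Nat.mul_add_mod, h]

lemma cnt1_gt {b L n m d r : ℕ} (hr : r < b) (h : d < r) :
    cnt1 b (L+1) (b*n+d) (b*m+r) = cnt2 b L n m + 1 := by
  unfold cnt1 cnt2
  rw [card_filter_range_succ]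
  simp only [mod_aux (by omega : 0 < b) _ _ _ hr, mod_aux (by omega : 0 < b) _ _ _ (h.trans hr), lt_aux2 hr h]
  simp [Nat.mod_eq_of_lt hr, Nat.mod_eq_of_lt (h.trans hr), Nat.mul_add_mod, h]

lemma cnt2_lt {b L n m d r : ℕ} (hd : d < b) (h : r < d) :
    cnt2 b (L+1) (b*n+d) (b*m+r) = cnt1 b L n m := by
  unfold cnt1 cnt2
  rw [card_filter_range_succ]
  simp only [mod_aux (by omega : 0 < b) _ _ _ hd, mod_aux (by omega : 0 < b) _ _ _ (h.trans hd)]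
  have : ∀ x y, b * x + d ≤ b * y + r ↔ x < y := fun x y => by
    rw [← not_lt, lt_aux2 hd h, not_le]
  simp only [this]
  simp [Nat.mod_eq_of_lt hd, Nat.mod_eq_of_lt (h.trans hd), Nat.mul_add_mod, h]

lemma cnt2_ge {b L n m d r : ℕ} (hr : r < b) (h : d ≤ r) :
    cnt2 b (L+1) (b*n+d) (b*m+r) = cnt2 b L n m + 1 := by
  unfold cnt2
  rw [card_filter_range_succ]
  simp only [mod_aux (by omega : 0 < b) _ _ _ hr, mod_aux (by omega : 0 < b) _ _ _ (h.trans_lt hr)]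
  have : ∀ x y, b * x + d ≤ b * y + r ↔ x ≤ y := fun x y => by
    rw [← not_lt, lt_aux1 hr h, not_lt]
  simp only [this]
  simp [Nat.mod_eq_of_lt hr, Nat.mod_eq_of_lt (h.trans_lt hr), Nat.mul_add_mod, h]

lemma sum_range_mul_aux {R : Type*} [AddCommMonoid R] (f : ℕ → R) (b M : ℕ) :
    ∑ m ∈ Finset.range (b * M), f m = ∑ m ∈ Finset.range M, ∑ r ∈ Finset.range b, f (b*m+r) := by
  induction M with
  | zero => simp
  | succ M ih => rw [Nat.mul_succ, Finset.sum_range_add, Finset.sum_range_succ, ih]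

lemma sum_split {R : Type*} [AddCommMonoid R] (f : ℕ → R) (b d : ℕ) (hd : d ≤ b) (p q : R)
    (h1 : ∀ r < d, f r = p) (h2 : ∀ r < b, d ≤ r → f r = q) :
    ∑ r ∈ Finset.range b, f r = d • p + (b - d) • q := by
  obtain ⟨e, rfl⟩ := Nat.exists_eq_add_of_le hd
  rw [Finset.sum_range_add, Finset.sum_congr rfl (g := fun _ => p), Finset.sum_congr (s₁ := Finset.range e) rfl (g := fun _ => q)]
  · simp
  · intro r hr
    have := Finset.mem_range.1 hr
    exact h2 _ (by omega) (by omega)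
  · intro r hr
    exact h1 _ (Finset.mem_range.1 hr)

/-- gen. function -/
noncomputable def Apol (b L n : ℕ) : ℚ[X] := ∑ m ∈ Finset.range (n+1), X ^ cnt1 b L n m
/-- gen. function -/
noncomputable def Bpol (b L n : ℕ) : ℚ[X] := ∑ m ∈ Finset.range n, X ^ cnt2 b L n m

lemma Apol_succ {b L n d : ℕ} (hd : d < b) : Apol b (L+1) (b*n+d) =
    C ((d:ℚ)+1) * Apol b L n + C ((b:ℚ) - d - 1) * X * Bpol b L n := by
  unfold Apol Bpol
  rw [add_assoc, Finset.sum_range_add, sum_range_mul_aux]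
  have h1 : ∀ m ∈ Finset.range n, ∑ r ∈ Finset.range b, (X:ℚ[X]) ^ cnt1 b (L+1) (b*n+d) (b*m+r)
      = (d+1) • X ^ cnt1 b L n m + (b - (d+1)) • X ^ (cnt2 b L n m + 1) := by
    intro m _
    apply sum_split _ _ _ hd
    · intro r hr
      rw [cnt1_le hd (by omega)]
    · intro r hr hr'
      rw [cnt1_gt hr (by omega)]
  have h2 : ∀ r ∈ Finset.range (d+1), (X:ℚ[X]) ^ cnt1 b (L+1) (b*n+d) (b*n+r) = X ^ cnt1 b L n n := by
    intro r hr
    have := Finset.mem_range.1 hr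
    rw [cnt1_le hd (by omega)]
  rw [Finset.sum_congr rfl h1, Finset.sum_congr rfl h2, Finset.sum_add_distrib, ← Finset.smul_sum, ← Finset.smul_sum,
    Finset.sum_range_succ (fun m => (X:ℚ[X]) ^ cnt1 b L n m) n]
  simp only [pow_succ, ← Finset.sum_mul, nsmul_eq_mul, Finset.sum_const, Finset.card_range, Nat.cast_sub (Nat.succ_le_of_lt hd)]
  simp only [map_add, map_sub, map_natCast, map_one, Nat.succ_eq_add_one]
  push_cast
  ring

lemma Bpol_succ {b L n d : ℕ} (hd : d < b) : Bpol b (L+1) (b*n+d) =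
    C (d:ℚ) * Apol b L n + C ((b:ℚ) - d) * X * Bpol b L n := by
  unfold Apol Bpol
  rw [Finset.sum_range_add, sum_range_mul_aux]
  have h1 : ∀ m ∈ Finset.range n, ∑ r ∈ Finset.range b, (X:ℚ[X]) ^ cnt2 b (L+1) (b*n+d) (b*m+r)
      = d • X ^ cnt1 b L n m + (b - d) • X ^ (cnt2 b L n m + 1) := by
    intro m _
    apply sum_split _ _ _ hd.le
    · intro r hr
      rw [cnt2_lt hd (by omega)]
    · intro r hr hr'
      rw [cnt2_ge hr (by omega)]
  have h2 : ∀ r ∈ Finset.range d, (X:ℚ[X]) ^ cnt2 b (L+1) (b*n+d) (b*n+r) = X ^ cnt1 b L n n := by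
    intro r hr
    have := Finset.mem_range.1 hr
    rw [cnt2_lt hd (by omega)]
  rw [Finset.sum_congr rfl h1, Finset.sum_congr rfl h2, Finset.sum_add_distrib, ← Finset.smul_sum, ← Finset.smul_sum,
    Finset.sum_range_succ (fun m => (X:ℚ[X]) ^ cnt1 b L n m) n]
  simp only [pow_succ, ← Finset.sum_mul, nsmul_eq_mul, Finset.sum_const, Finset.card_range, Nat.cast_sub hd.le]
  simp only [map_sub, map_natCast]
  ring

/-- prefix numbers -/
def Npre (b : ℕ) (W : List ℕ) (L : ℕ) : ℕ := Nat.ofDigits b (W.take L).reverse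

lemma Npre_succ (b : ℕ) (W : List ℕ) (L : ℕ) (h : L < W.length) :
    Npre b W (L+1) = b * Npre b W L + W.getD L 0 := by
  unfold Npre
  rw [List.take_add_one, List.getElem?_eq_getElem h, List.getD_eq_getElem _ _ h, Option.toList_some,
    List.reverse_append, List.reverse_singleton, List.singleton_append, Nat.ofDigits_cons, add_comm]

/-- weight -/
noncomputable def uw (b : ℕ) (W : List ℕ) (q : ℕ × ℕ) : ℚ[X] :=
  C (cword b ((W.drop q.1).take q.2)) * X ^ (q.2 - 1)

/-- open weight -/
noncomputable def gw (b : ℕ) (W : List ℕ) (s L : ℕ) : ℚ :=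
  (W.getD s 0 : ℚ) / ((W.getD s 0 : ℚ) + 1) *
    ∏ h ∈ Finset.Ico (s+1) L, ((b : ℚ) - (W.getD h 0 : ℚ)) / ((W.getD h 0 : ℚ) + 1)

lemma cword_eq (b : ℕ) (W : List ℕ) (s L : ℕ) (hs : s < L) (hL : L < W.length) :
    cword b ((W.drop s).take (L+1-s)) =
      gw b W s L * (((b:ℚ) - W.getD L 0 - 1) / ((W.getD L 0 : ℚ) + 1)) := by
  have hlen : ((W.drop s).take (L+1-s)).length = L + 1 - s := by simp; omega
  have hg : ∀ h, h < L + 1 - s → ((W.drop s).take (L+1-s)).getD h 0 = W.getD (s+h) 0 := by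
    intro h hh
    simp [List.getD_eq_getElem?_getD, List.getElem?_take, hh]
  unfold cword gw
  rw [hlen, hg 0 (by omega), hg (L+1-s-1) (by omega)]
  have e : s + (L + 1 - s - 1) = L := by omega
  rw [e, add_zero]
  congr 2
  rw [Finset.prod_Ico_eq_prod_range, Finset.prod_Ico_eq_prod_range]
  have e2 : L + 1 - s - 1 - 1 = L - (s+1) := by omega
  rw [e2]
  refine Finset.prod_congr rfl fun h hh => ?_
  have := Finset.mem_range.1 hh
  rw [hg _ (by omega), add_assoc]

lemma gw_succ (b : ℕ) (W : List ℕ) (s L : ℕ) (hs : s < L) :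
    gw b W s (L+1) = gw b W s L * (((b:ℚ) - W.getD L 0) / ((W.getD L 0 : ℚ) + 1)) := by
  unfold gw
  rw [Finset.prod_Ico_succ_top (by omega), mul_assoc]

lemma gw_self (b : ℕ) (W : List ℕ) (L : ℕ) :
    gw b W L (L+1) = (W.getD L 0 : ℚ) / ((W.getD L 0 : ℚ) + 1) := by
  simp [gw]

/-- normalizing product -/
noncomputable def Pr (W : List ℕ) (L : ℕ) : ℚ := ∏ i ∈ Finset.range L, ((W.getD i 0 : ℚ) + 1)

lemma main_ind (b : ℕ) (W : List ℕ) (hW : ∀ d ∈ W, d < b) (L : ℕ) (hL : L ≤ W.length) :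
    Apol b L (Npre b W L) = C (Pr W L) * Gsum (uw b W) L ∧
    Bpol b L (Npre b W L) = C (Pr W L) *
      ∑ s ∈ Finset.range L, C (gw b W s L) * X ^ (L - 1 - s) * Gsum (uw b W) s := by
  induction L with
  | zero => simp [Apol, Bpol, Npre, cnt1, Pr, Gsum_zero]
  | succ L ih =>
    obtain ⟨iA, iB⟩ := ih (by omega)
    have hd : W.getD L 0 < b := by
      rw [List.getD_eq_getElem _ _ (by omega)]
      exact hW _ (List.getElem_mem _)
    have hne : ((W.getD L 0 : ℕ) : ℚ) + 1 ≠ 0 := by positivity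
    have hP : Pr W (L+1) = Pr W L * ((W.getD L 0 : ℚ) + 1) := by
      unfold Pr; rw [Finset.prod_range_succ]
    rw [Npre_succ b W L (by omega), Apol_succ hd, Bpol_succ hd, iA, iB, hP]
    constructor
    · rw [Gsum_succ]
      have h : ∀ s ∈ Finset.range L, uw b W (s, L+1-s) * Gsum (uw b W) s =
          C (((b:ℚ) - W.getD L 0 - 1) / ((W.getD L 0 : ℚ) + 1)) * X *
            (C (gw b W s L) * X ^ (L - 1 - s) * Gsum (uw b W) s) := by
        intro s hs
        have hs := Finset.mem_range.1 hs
        unfold uw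
        dsimp only
        rw [cword_eq b W s L hs (by omega), show L + 1 - s - 1 = (L - 1 - s) + 1 by omega, pow_succ, C_mul]
        ring
      rw [Finset.sum_congr rfl h, ← Finset.mul_sum]
      have e : C ((b:ℚ) - W.getD L 0 - 1) = C ((W.getD L 0 : ℚ) + 1) * C (((b:ℚ) - W.getD L 0 - 1) / ((W.getD L 0 : ℚ) + 1)) := by
        rw [← C_mul, mul_div_cancel₀ _ hne]
      rw [e, C_mul]
      ring
    · rw [Finset.sum_range_succ, gw_self]
      have h : ∀ s ∈ Finset.range L, C (gw b W s (L+1)) * X ^ (L + 1 - 1 - s) * Gsum (uw b W) s =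
          C (((b:ℚ) - W.getD L 0) / ((W.getD L 0 : ℚ) + 1)) * X *
            (C (gw b W s L) * X ^ (L - 1 - s) * Gsum (uw b W) s) := by
        intro s hs
        have hs := Finset.mem_range.1 hs
        rw [gw_succ b W s L hs, show L + 1 - 1 - s = (L - 1 - s) + 1 by omega, pow_succ, C_mul]
        ring
      rw [Finset.sum_congr rfl h, ← Finset.mul_sum]
      have e : C ((b:ℚ) - W.getD L 0) = C ((W.getD L 0 : ℚ) + 1) * C (((b:ℚ) - W.getD L 0) / ((W.getD L 0 : ℚ) + 1)) := by
        rw [← C_mul, mul_div_cancel₀ _ hne]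
      have e' : C (W.getD L 0 : ℚ) = C ((W.getD L 0 : ℚ) + 1) * C ((W.getD L 0 : ℚ) / ((W.getD L 0 : ℚ) + 1)) := by
        rw [← C_mul, mul_div_cancel₀ _ hne]
      rw [e, e', C_mul]
      simp only [Nat.add_sub_cancel, Nat.sub_self, pow_zero]
      ring

lemma Gsum_coeff_zero (b : ℕ) (W : List ℕ) (L : ℕ) : (Gsum (uw b W) L).coeff 0 = 1 := by
  induction L with
  | zero => simp [Gsum_zero]
  | succ L ih =>
    rw [Gsum_succ, coeff_add, ih, finsetSum_coeff, Finset.sum_eq_zero, add_zero]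
    intro s hs
    have hs := Finset.mem_range.1 hs
    unfold uw
    dsimp only
    rw [mul_coeff_zero, mul_coeff_zero, coeff_X_pow, if_neg (by omega)]
    simp

lemma Gsum_coeff (b : ℕ) (W : List ℕ) (L β : ℕ) : (Gsum (uw b W) L).coeff β =
    ∑ S ∈ (Vfam L).filter (fun S => ∑ q ∈ S, (q.2 - 1) = β),
      ∏ q ∈ S, cword b ((W.drop q.1).take q.2) := by
  unfold Gsum
  rw [finsetSum_coeff, Finset.sum_filter]
  refine Finset.sum_congr rfl fun S hS => ?_
  unfold uw
  rw [Finset.prod_mul_distrib, Finset.prod_pow_eq_pow_sum, ← map_prod, coeff_C_mul, coeff_X_pow]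
  simp [eq_comm]

lemma borrowA_coeff (b n β : ℕ) :
    (borrowA b n β : ℚ) = (Apol b (Nat.digits b n).length n).coeff β := by
  unfold borrowA Apol
  rw [finsetSum_coeff, Finset.card_filter]
  push_cast
  refine Finset.sum_congr rfl fun m _ => ?_
  rw [coeff_X_pow]
  have e : cnt1 b (Nat.digits b n).length n m = borrowCount b n m := rfl
  rw [e]
  by_cases h : borrowCount b n m = β
  · rw [if_pos h, if_pos h.symm]
  · rw [if_neg h, if_neg (Ne.symm h)]

lemma sum_sub_one (L : ℕ) (S : Finset (ℕ × ℕ)) (h : ∀ q ∈ S, 2 ≤ q.2) :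
    ∑ q ∈ S, (q.2 - 1) + S.card = ∑ q ∈ S, q.2 := by
  rw [Finset.card_eq_sum_ones, ← Finset.sum_add_distrib]
  refine Finset.sum_congr rfl fun q hq => ?_
  have := h q hq
  omega

lemma rhs_eq (b : ℕ) (W : List ℕ) (β : ℕ) :
    ∑ γ ∈ Finset.Icc β (2 * β),
      ∑ P ∈ Finset.univ.filter (fun P : Nat.Partition γ =>
              Multiset.card P.parts = γ - β ∧ ∀ x ∈ P.parts, 2 ≤ x),
            nonoverlapSum b W P.parts =
    ∑ S ∈ (Vfam W.length).filter (fun S => ∑ q ∈ S, (q.2 - 1) = β),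
      ∏ q ∈ S, cword b ((W.drop q.1).take q.2) := by
  unfold nonoverlapSum
  simp only [Finset.sum_sigma']
  refine Finset.sum_bij (fun x _ => x.2.2) ?_ ?_ ?_ ?_
  · rintro ⟨γ, P, S⟩ h
    simp only [Finset.mem_sigma, Finset.mem_filter, Finset.mem_Icc, Finset.mem_univ, true_and] at h
    obtain ⟨⟨hγ1, hγ2⟩, ⟨hc, h2⟩, hS, hm, h3, h4⟩ := h
    have hS2 : ∀ q ∈ S, 2 ≤ q.2 := fun q hq => h2 _ (by
      rw [← hm]; exact Multiset.mem_map_of_mem _ hq)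
    rw [Finset.mem_filter, mem_Vfam]
    refine ⟨⟨fun q hq => ⟨hS2 q hq, h3 q hq⟩, h4⟩, ?_⟩
    have e1 := sum_sub_one 0 S hS2
    have e2 : ∑ q ∈ S, q.2 = γ := by
      rw [← P.parts_sum, ← hm]; rfl
    have e3 : S.card = γ - β := by rw [← hc, ← hm]; simp
    dsimp only
    omega
  · rintro ⟨γ, P, S⟩ h ⟨γ', P', S'⟩ h' hSS
    simp only [Finset.mem_sigma, Finset.mem_filter] at h h'
    dsimp only at hSS
    subst hSS
    have e : P.parts = P'.parts := by rw [← h.2.2.2.1, ← h'.2.2.2.1]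
    have : γ = γ' := by rw [← P.parts_sum, ← P'.parts_sum, e]
    subst this
    have : P = P' := Nat.Partition.ext e
    rw [this]
  · intro S hS
    rw [Finset.mem_filter, mem_Vfam] at hS
    obtain ⟨⟨h1, h2⟩, h3⟩ := hS
    have hS2 : ∀ q ∈ S, 2 ≤ q.2 := fun q hq => (h1 q hq).1
    have e1 := sum_sub_one 0 S hS2
    have e4 : S.card ≤ ∑ q ∈ S, (q.2 - 1) := by
      rw [Finset.card_eq_sum_ones]
      refine Finset.sum_le_sum fun q hq => ?_
      have := hS2 q hq
      omega
    refine ⟨⟨∑ q ∈ S, q.2, ⟨Multiset.map Prod.snd S.val, ?_, rfl⟩, S⟩, ?_, rfl⟩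
    · intro i hi
      obtain ⟨q, hq, rfl⟩ := Multiset.mem_map.1 hi
      have := hS2 q hq
      omega
    · simp only [Finset.mem_sigma, Finset.mem_filter, Finset.mem_Icc, Finset.mem_univ, true_and]
      refine ⟨⟨by omega, by omega⟩, ⟨?_, ?_⟩, ?_, ?_, h2⟩
      · rw [Multiset.card_map, Finset.card_val]; omega
      · intro i hi
        obtain ⟨q, hq, rfl⟩ := Multiset.mem_map.1 hi
        exact hS2 q hq
      · rw [Finset.mem_powerset]
        intro q hq
        have := h1 q hq
        simp
        omega
      · exact fun q hq => (h1 q hq).2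
  · intros; rfl

/-- **Proposition.** For `b ≥ 2`, `β ≥ 0` and `n ≥ 0` with base-`b` digits `n_l ⋯ n_0`,
`A_n(β) = A_n(0) · Σ_{γ=β}^{2β} Σ_{P ∈ S(γ, γ−β)} Σ_{nonoverlapping subwords} c(v)⋯c(z)`,
where `S(γ,δ)` is the set of partitions of `γ` into exactly `δ` parts, all parts at least 2. -/
theorem stmt1 (b : ℕ) (hb : 2 ≤ b) (β n : ℕ) :
    (borrowA b n β : ℚ) =
      (borrowA b n 0 : ℚ) *
        ∑ γ ∈ Finset.Icc β (2 * β),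
          ∑ P ∈ Finset.univ.filter (fun P : Nat.Partition γ =>
              Multiset.card P.parts = γ - β ∧ ∀ x ∈ P.parts, 2 ≤ x),
            nonoverlapSum b (wordOf b n) P.parts := by
  have hA := (main_ind b (wordOf b n) (fun d hd => Nat.digits_lt_base (by omega)
    (List.mem_reverse.1 hd)) (wordOf b n).length le_rfl).1
  have hN : Npre b (wordOf b n) (wordOf b n).length = n := by
    rw [Npre, List.take_length, wordOf, List.reverse_reverse, Nat.ofDigits_digits]
  have hl : (wordOf b n).length = (Nat.digits b n).length := by simp [wordOf]
  rw [hN] at hA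
  rw [rhs_eq, ← Gsum_coeff, borrowA_coeff, borrowA_coeff, ← hl, hA, coeff_C_mul, coeff_C_mul,
    Gsum_coeff_zero, mul_one]
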